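/- arXiv:2205.08618 — 3 statements merged into one kernel-verified Lean document; each statement's English description precedes it below -/
import Mathlib

section
/- The series Σ_{n=0}^∞ H_n/((n+1)(n+2)) converges and its sum equals 1, where H_n denotes the n-th harmonic number. -/
/-!
By partial fractions and `H (n+1) = H n + 1/(n+1)`, the series telescopes: its `N`-th partial sum is
`1 - (H N + 1)/(N + 1)` (`sum_range_harmonic_div`). Since `H N / N` is a Cesàro mean of the null
sequence `1/(j+1)`, the error term tends to `0` (`tendsto_harmonic_div_succ`). The terms are
nonnegative, so convergence of the partial sums gives `HasSum`.
-/

open Finset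

/-- The `n`-th harmonic number `H_n = 1 + 1/2 + ⋯ + 1/n`, with `H_0 = 0`. -/
noncomputable def H (n : ℕ) : ℝ := ∑ j ∈ Finset.range n, 1 / ((j : ℝ) + 1)

/-- The partial sums telescope, because `1/((n+1)(n+2)) = 1/(n+1) - 1/(n+2)` and
`H (n+1) = H n + 1/(n+1)`. -/
lemma sum_range_harmonic_div (N : ℕ) :
    ∑ n ∈ Finset.range N, H n / (((n : ℝ) + 1) * ((n : ℝ) + 2)) =
      1 - (H N + 1) / ((N : ℝ) + 1) := by
  induction N with
  | zero => simp [H]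
  | succ k ih =>
    have hH : H (k + 1) = H k + 1 / ((k : ℝ) + 1) := by
      simp only [H, Finset.sum_range_succ]
    rw [Finset.sum_range_succ, ih, hH]
    push_cast
    field_simp
    ring

/-- `H N / N` is the Cesàro mean of the null sequence `1/(j+1)`. -/
lemma tendsto_harmonic_div_succ :
    Filter.Tendsto (fun N : ℕ => (H N + 1) / ((N : ℝ) + 1)) Filter.atTop (nhds 0) := by
  have h₁ : Filter.Tendsto (fun N : ℕ => 1 / ((N : ℝ) + 1)) Filter.atTop (nhds 0) :=
    tendsto_one_div_add_atTop_nhds_zero_nat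
  have h₂ : Filter.Tendsto (fun N : ℕ => (N : ℝ)⁻¹ * H N) Filter.atTop (nhds 0) := h₁.cesaro
  have h₃ : Filter.Tendsto (fun N : ℕ => (N : ℝ)⁻¹ * H N + 1 / ((N : ℝ) + 1))
      Filter.atTop (nhds 0) := by
    simpa using h₂.add h₁
  have hH : ∀ N, 0 ≤ H N := fun N => Finset.sum_nonneg fun j _ => by positivity
  refine squeeze_zero' (Filter.Eventually.of_forall fun N => ?_) ?_ h₃
  · have := hH N
    positivity
  · -- The bound needs `N > 0`, since `(0 : ℝ)⁻¹ = 0`.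
    filter_upwards [Filter.eventually_gt_atTop 0] with N hN
    have hN' : (0 : ℝ) < N := by exact_mod_cast hN
    have hle : H N / ((N : ℝ) + 1) ≤ H N / N :=
      div_le_div_of_nonneg_left (hH N) hN' (by linarith)
    rw [add_div, inv_mul_eq_div]
    linarith

/-- `∑_{n=0}^∞ H_n/((n+1)(n+2)) = 1`. -/
theorem hasSum_harmonic_div : HasSum (fun n : ℕ => H n / (((n : ℝ) + 1) * ((n : ℝ) + 2))) 1 := by
  have hnonneg : ∀ n : ℕ, 0 ≤ H n / (((n : ℝ) + 1) * ((n : ℝ) + 2)) := fun n =>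
    div_nonneg (Finset.sum_nonneg fun j _ => by positivity) (by positivity)
  -- For nonnegative terms, unconditional summability follows from convergence of partial sums.
  rw [hasSum_iff_tendsto_nat_of_nonneg hnonneg]
  simp only [sum_range_harmonic_div]
  simpa using tendsto_harmonic_div_succ.const_sub 1
end

section
/- For every real t with |t| < 1, Li₂(t/(1+t)) = Σ_{n=1}^∞ (−1)^{n−1} H_n t^n / n, the series on the right converging, where Li₂ is the dilogarithm and H_n is the n-th harmonic number. -/
/-!
The generating function `∑ H_{n+1} x^n` is the Cauchy product of `∑ x^n / (n+1)` and the geometric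
series, hence equals `-log (1 - x) / (x (1 - x))` for `0 < |x| < 1`. Putting `x = -s` and integrating
termwise from `0` to `t` (dominated convergence, with bound `H_{n+1} |t|^n`) shows that the series
sums to `∫_0^t log (1 + s) / (s (1 + s)) ds`. The substitution `u = s / (1 + s)`, for which
`1 - u = 1 / (1 + s)` and `du / u = ds / (s (1 + s))`, turns this integral into `Li2 (t / (1 + t))`.
The removable singularity of `log (1 - u) / u` at `0` is filled by `dslope`, which changes the
integrand only on a null set.
-/

open Finset

/-- The (real) dilogarithm, `Li₂(x) = -∫_0^x log(1-u)/u du`; for `|x| ≤ 1` this agrees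
with the series `∑_{n=1}^∞ x^n/n²`, and it is the analytic continuation of that series
for `x < 1`. -/
noncomputable def Li2 (x : ℝ) : ℝ := -∫ u in (0 : ℝ)..x, Real.log (1 - u) / u

lemma sum_range_pow_div_mul_pow (x : ℝ) (n : ℕ) :
    ∑ k ∈ Finset.range (n + 1), x ^ k / ((k : ℝ) + 1) * x ^ (n - k) = H (n + 1) * x ^ n := by
  rw [H, Finset.sum_mul]
  refine Finset.sum_congr rfl fun k hk => ?_
  have hk' : k ≤ n := Nat.lt_succ_iff.mp (Finset.mem_range.mp hk)
  rw [← pow_mul_pow_sub x hk']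
  ring

lemma summable_norm_pow_div {x : ℝ} (hx : |x| < 1) :
    Summable fun n : ℕ => ‖x ^ n / ((n : ℝ) + 1)‖ := by
  refine Summable.of_nonneg_of_le (fun _ => norm_nonneg _) (fun n => ?_)
    (summable_geometric_of_lt_one (abs_nonneg x) hx)
  have hn : (0 : ℝ) < (n : ℝ) + 1 := by positivity
  rw [norm_div, norm_pow, Real.norm_eq_abs, Real.norm_eq_abs, abs_of_pos hn]
  exact div_le_self (by positivity) (by linarith [(Nat.cast_nonneg n : (0 : ℝ) ≤ n)])

lemma summable_norm_pow {x : ℝ} (hx : |x| < 1) : Summable fun n : ℕ => ‖x ^ n‖ := by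
  simpa [norm_pow] using summable_geometric_of_lt_one (abs_nonneg x) hx

lemma summable_norm_H_mul_pow {x : ℝ} (hx : |x| < 1) :
    Summable fun n : ℕ => ‖H (n + 1) * x ^ n‖ := by
  simpa only [sum_range_pow_div_mul_pow] using
    summable_norm_sum_mul_range_of_summable_norm (summable_norm_pow_div hx) (summable_norm_pow hx)

lemma hasSum_H_mul_pow {x : ℝ} (hx : |x| < 1) (h0 : x ≠ 0) :
    HasSum (fun n : ℕ => H (n + 1) * x ^ n) (-Real.log (1 - x) / (x * (1 - x))) := by
  have h := hasSum_sum_range_mul_of_summable_norm (summable_norm_pow_div hx) (summable_norm_pow hx)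
  simp only [sum_range_pow_div_mul_pow] at h
  have h1 : HasSum (fun n : ℕ => x ^ n / ((n : ℝ) + 1)) (-Real.log (1 - x) / x) := by
    refine ((Real.hasSum_pow_div_log_of_abs_lt_one hx).div_const x).congr_fun fun n => ?_
    field_simp
    ring
  rw [h1.tsum_eq, (hasSum_geometric_of_abs_lt_one hx).tsum_eq] at h
  rwa [← div_eq_mul_inv, div_div] at h

lemma H_nonneg (n : ℕ) : 0 ≤ H n := Finset.sum_nonneg fun _ _ => by positivity

/-- Termwise integration of the generating function of the harmonic numbers. -/
lemma hasSum_integral_log_div {t : ℝ} (ht : |t| < 1) :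
    HasSum (fun n : ℕ => (-1) ^ n * H (n + 1) * t ^ (n + 1) / ((n : ℝ) + 1))
      (∫ s in (0 : ℝ)..t, Real.log (1 + s) / (s * (1 + s))) := by
  have habs : ∀ s ∈ Set.uIoc 0 t, |s| ≤ |t| := fun s hs => by
    simpa using Set.abs_sub_left_of_mem_uIcc (Set.uIoc_subset_uIcc hs)
  have hsum : Summable fun n : ℕ => H (n + 1) * |t| ^ n := by
    refine (summable_norm_H_mul_pow ht).congr fun n => ?_
    rw [norm_mul, norm_pow, Real.norm_of_nonneg (H_nonneg _), Real.norm_eq_abs]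
  have key := intervalIntegral.hasSum_integral_of_dominated_convergence
    (μ := MeasureTheory.volume) (a := 0) (b := t)
    (F := fun (n : ℕ) (s : ℝ) => (-1) ^ n * H (n + 1) * s ^ n)
    (f := fun s => Real.log (1 + s) / (s * (1 + s)))
    (fun n _ => H (n + 1) * |t| ^ n) ?_ ?_ ?_ ?_ ?_
  · refine key.congr_fun fun n => ?_
    rw [intervalIntegral.integral_const_mul, integral_pow]
    simp [mul_div_assoc]
  · exact fun n => (by fun_prop : Continuous _).aestronglyMeasurable
  · refine fun n => .of_forall fun s hs => ?_
    rw [norm_mul, norm_mul, norm_pow, norm_pow, norm_neg, norm_one, one_pow, one_mul,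
      Real.norm_of_nonneg (H_nonneg _), Real.norm_eq_abs]
    exact mul_le_mul_of_nonneg_left (pow_le_pow_left₀ (abs_nonneg s) (habs s hs) n) (H_nonneg _)
  · exact .of_forall fun _ _ => hsum
  · exact intervalIntegrable_const
  · filter_upwards [MeasureTheory.Measure.ae_ne MeasureTheory.volume (0 : ℝ)] with s h0 hs
    have h := hasSum_H_mul_pow (x := -s) (by rw [abs_neg]; exact (habs s hs).trans_lt ht)
      (neg_ne_zero.mpr h0)
    rw [sub_neg_eq_add, neg_mul, neg_div_neg_eq] at h
    refine h.congr_fun fun n => ?_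
    rw [neg_pow s n]
    ring

/-- The substitution `u = s / (1 + s)` in the integral defining the dilogarithm. -/
lemma Li2_div_one_add {t : ℝ} (ht : -1 < t) :
    Li2 (t / (1 + t)) = ∫ s in (0 : ℝ)..t, Real.log (1 + s) / (s * (1 + s)) := by
  set g : ℝ → ℝ := dslope (fun u => Real.log (1 - u)) 0 with hg
  have hgne : ∀ u ≠ 0, g u = Real.log (1 - u) / u := fun u hu => by
    rw [hg, dslope_of_ne _ hu, slope_def_field]
    simp
  have hgc : ContinuousOn g (Set.Iio 1) := by
    refine (continuousOn_dslope (Iio_mem_nhds one_pos)).mpr ⟨?_, ?_⟩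
    · exact ContinuousOn.log (by fun_prop) fun u hu => (sub_pos.mpr hu).ne'
    · exact DifferentiableAt.log (by fun_prop) (by simp)
  have hpos : ∀ s ∈ Set.uIcc 0 t, 0 < 1 + s := fun s hs => by
    have := (Set.mem_uIcc.mp hs)
    rcases this with h | h <;> linarith [h.1]
  have hsub := intervalIntegral.integral_comp_mul_deriv' (a := 0) (b := t)
    (f := fun s => s / (1 + s)) (f' := fun s => 1 / (1 + s) ^ 2) (g := g) ?_ ?_ ?_
  · have hL : Li2 (t / (1 + t)) = -∫ u in (0 : ℝ)..t / (1 + t), g u := by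
      rw [Li2]
      congr 1
      refine intervalIntegral.integral_congr_ae ?_
      filter_upwards [MeasureTheory.Measure.ae_ne MeasureTheory.volume (0 : ℝ)] with u h0 _
      exact (hgne u h0).symm
    simp only [zero_div] at hsub
    rw [hL, ← hsub, ← intervalIntegral.integral_neg]
    refine intervalIntegral.integral_congr_ae ?_
    filter_upwards [MeasureTheory.Measure.ae_ne MeasureTheory.volume (0 : ℝ)] with s h0 hs
    have h1 := hpos s (Set.uIoc_subset_uIcc hs)
    have h2 : 1 - s / (1 + s) = (1 + s)⁻¹ := by field_simp; ring
    rw [Function.comp_apply, hgne _ (div_ne_zero h0 h1.ne'), h2, Real.log_inv]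
    field_simp
  · intro s hs
    have h1 := hpos s hs
    have h := (hasDerivAt_id s).div ((hasDerivAt_id s).const_add 1) h1.ne'
    refine h.congr_deriv ?_
    simp
  · exact ContinuousOn.div (by fun_prop) (by fun_prop) fun s hs => (pow_pos (hpos s hs) 2).ne'
  · refine hgc.mono ?_
    rintro _ ⟨s, hs, rfl⟩
    exact (div_lt_one (hpos s hs)).mpr (by linarith)

/-- For `|t| < 1`, `Li₂(t/(1+t)) = ∑_{n=1}^∞ (−1)^{n−1} H_n t^n / n`, the series
converging. -/
theorem dilog_self_div_hasSum (t : ℝ) (ht : |t| < 1) :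
    HasSum (fun n : ℕ => (-1) ^ n * H (n + 1) * t ^ (n + 1) / ((n : ℝ) + 1))
      (Li2 (t / (1 + t))) := by
  rw [Li2_div_one_add (abs_lt.mp ht).1]
  exact hasSum_integral_log_div ht
end

section
/- For every real t with |t| < 1, Σ_{n=0}^∞ (H_n² − H_n^{(2)}) t^{n+1}/(n+1) = −(1/3) (log(1−t))³, the series converging, where H_n is the n-th harmonic number and H_n^{(2)} = Σ_{j=1}^n 1/j². -/
/-!
Put `L t = -log (1 - t)`, so that `L' = 1 / (1 - t)` and `L t = ∑ t^(n+1)/(n+1)`. Dividing a power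
series by `1 - t` replaces its coefficients by their partial sums (`hasSum_partialSums`), and power
series may be integrated termwise (`hasSum_primitive`). Doing both, starting from the series
of `L`, gives the series `L² / 2 = ∑ H n t^(n+1)/(n+1)`, because `(L²/2)' = L / (1 - t)`.
Doing both again, starting from `L²`, gives the series of `L³ / 3`, because
`(L³/3)' = L² / (1 - t)` and the partial sums of `2 H k / (k+1)` telescope to `H n ^ 2 - H2 n`
(`sum_two_mul_H_div`).
-/

open Finset

/-- The `n`-th generalized harmonic number of order 2, `H_n^{(2)} = ∑_{j=1}^n 1/j²`. -/
noncomputable def H2 (n : ℕ) : ℝ := ∑ j ∈ Finset.range n, 1 / ((j : ℝ) + 1) ^ 2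

/-- Multiplication by the geometric series turns coefficients into partial sums. The index shift
makes the coefficient of `t ^ n` the sum over `k < n`. -/
lemma hasSum_partialSums {b : ℕ → ℝ} {t s : ℝ} (ht : |t| < 1)
    (h : HasSum (fun n => b n * t ^ (n + 1)) s) :
    HasSum (fun n => (∑ k ∈ range n, b k) * t ^ n) (s / (1 - t)) := by
  have hb : Summable (fun n => ‖b n * t ^ (n + 1)‖) := h.summable.norm
  have hgeo : Summable (fun n => ‖t ^ n‖) := (summable_geometric_of_abs_lt_one ht).norm
  have hprod := hasSum_sum_range_mul_of_summable_norm hb hgeo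
  rw [h.tsum_eq, tsum_geometric_of_abs_lt_one ht, ← div_eq_mul_inv] at hprod
  rw [← hasSum_nat_add_iff' 1]
  simp only [sum_range_one, range_zero, sum_empty, zero_mul, sub_zero]
  refine (congrArg (fun g => HasSum g _) (funext fun n => ?_)).mpr hprod
  rw [sum_mul]
  refine sum_congr rfl fun k hk => ?_
  have hkn : n + 1 = (k + 1) + (n - k) := by
    have := mem_range.1 hk
    omega
  rw [hkn, pow_add, mul_assoc]

/-- Termwise integration of a power series converging on `(-1, 1)`. -/
lemma hasSum_primitive {a : ℕ → ℝ} {f F : ℝ → ℝ}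
    (hf : ∀ t, |t| < 1 → HasSum (fun n => a n * t ^ n) (f t))
    (hF : ∀ t, |t| < 1 → HasDerivAt F (f t) t) (hF0 : F 0 = 0) {t : ℝ} (ht : |t| < 1) :
    HasSum (fun n : ℕ => a n * t ^ (n + 1) / ((n : ℝ) + 1)) (F t) := by
  obtain ⟨r, htr, hr1⟩ := exists_between ht
  have hr0 : 0 < r := (abs_nonneg t).trans_lt htr
  -- On the smaller ball the derivatives are dominated by their absolute values at `r`.
  have hu : Summable (fun n => ‖a n * r ^ n‖) :=
    (hf r (by rwa [abs_of_pos hr0])).summable.norm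
  have hopen : IsOpen (Metric.ball (0 : ℝ) r) := Metric.isOpen_ball
  have hconn : IsPreconnected (Metric.ball (0 : ℝ) r) := (convex_ball 0 r).isPreconnected
  have hder : ∀ (n : ℕ) (y : ℝ), y ∈ Metric.ball (0 : ℝ) r →
      HasDerivAt (fun z => a n * z ^ (n + 1) / ((n : ℝ) + 1)) (a n * y ^ n) y := by
    intro n y _
    have h := ((hasDerivAt_pow (n + 1) y).const_mul (a n)).div_const ((n : ℝ) + 1)
    refine h.congr_deriv ?_
    have hn : (n : ℝ) + 1 ≠ 0 := by positivity
    push_cast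
    field_simp
  have hbound : ∀ (n : ℕ) (y : ℝ), y ∈ Metric.ball (0 : ℝ) r →
      ‖a n * y ^ n‖ ≤ ‖a n * r ^ n‖ := by
    intro n y hy
    rw [mem_ball_zero_iff, Real.norm_eq_abs] at hy
    simp only [norm_mul, norm_pow, Real.norm_eq_abs, abs_of_pos hr0]
    gcongr
  have h0 : (0 : ℝ) ∈ Metric.ball (0 : ℝ) r := Metric.mem_ball_self hr0
  have htb : t ∈ Metric.ball (0 : ℝ) r := by
    rwa [mem_ball_zero_iff, Real.norm_eq_abs]
  have hs0 : Summable (fun n : ℕ => a n * (0 : ℝ) ^ (n + 1) / ((n : ℝ) + 1)) := by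
    simp
  have hlt : ∀ y ∈ Metric.ball (0 : ℝ) r, |y| < 1 := by
    intro y hy
    rw [mem_ball_zero_iff, Real.norm_eq_abs] at hy
    exact hy.trans hr1
  have hG : ∀ y ∈ Metric.ball (0 : ℝ) r,
      HasDerivAt (fun z => ∑' n : ℕ, a n * z ^ (n + 1) / ((n : ℝ) + 1)) (f y) y := by
    intro y hy
    rw [← (hf y (hlt y hy)).tsum_eq]
    exact hasDerivAt_tsum_of_isPreconnected hu hopen hconn hder hbound h0 hs0 hy
  have heq := hopen.eqOn_of_deriv_eq hconn
    (fun y hy => (hG y hy).differentiableAt.differentiableWithinAt)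
    (fun y hy => (hF y (hlt y hy)).differentiableAt.differentiableWithinAt)
    (fun y hy => by rw [(hG y hy).deriv, (hF y (hlt y hy)).deriv]) h0
    (by simp [hF0]) htb
  have hsum := summable_of_summable_hasDerivAt_of_isPreconnected hu hopen hconn hder hbound
    h0 hs0 htb
  exact heq ▸ hsum.hasSum

lemma sum_two_mul_H_div (n : ℕ) :
    ∑ k ∈ range n, 2 * H k / ((k : ℝ) + 1) = H n ^ 2 - H2 n := by
  induction n with
  | zero => simp [H, H2]
  | succ n ih =>
    have h1 : H (n + 1) = H n + 1 / ((n : ℝ) + 1) := sum_range_succ _ n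
    have h2 : H2 (n + 1) = H2 n + 1 / ((n : ℝ) + 1) ^ 2 := sum_range_succ _ n
    rw [sum_range_succ, ih, h1, h2]
    field_simp
    ring

lemma hasDerivAt_neg_log_one_sub {t : ℝ} (ht : |t| < 1) :
    HasDerivAt (fun x => -Real.log (1 - x)) (1 / (1 - t)) t := by
  have hne : 1 - t ≠ 0 := (sub_pos.2 (abs_lt.1 ht).2).ne'
  refine (((hasDerivAt_id t).const_sub 1).log hne).neg.congr_deriv ?_
  simp [neg_div]

lemma hasSum_H {t : ℝ} (ht : |t| < 1) :
    HasSum (fun n : ℕ => H n * t ^ (n + 1) / ((n : ℝ) + 1)) ((-Real.log (1 - t)) ^ 2 / 2) := by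
  refine hasSum_primitive (f := fun t => -Real.log (1 - t) / (1 - t))
    (F := fun t => (-Real.log (1 - t)) ^ 2 / 2) (fun x hx => ?_) (fun x hx => ?_) (by simp) ht
  · refine hasSum_partialSums (b := fun n => 1 / ((n : ℝ) + 1)) hx ?_
    refine (congrArg (fun g => HasSum g _) (funext fun n => ?_)).mpr
      (Real.hasSum_pow_div_log_of_abs_lt_one hx)
    ring
  · refine (((hasDerivAt_neg_log_one_sub hx).pow 2).div_const 2).congr_deriv ?_
    push_cast
    ring

/-- For `|t| < 1`, `∑_{n=0}^∞ (H_n² − H_n^{(2)}) t^{n+1}/(n+1) = −(1/3)(log(1−t))³`,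
the series converging. -/
theorem hasSum_sq_harmonic (t : ℝ) (ht : |t| < 1) :
    HasSum (fun n : ℕ => (H n ^ 2 - H2 n) * t ^ (n + 1) / ((n : ℝ) + 1))
      (-(1 / 3) * Real.log (1 - t) ^ 3) := by
  have key := hasSum_primitive (a := fun n => H n ^ 2 - H2 n)
    (f := fun t => (-Real.log (1 - t)) ^ 2 / (1 - t))
    (F := fun t => (-Real.log (1 - t)) ^ 3 / 3) (fun x hx => ?_) (fun x hx => ?_) (by simp) ht
  · convert key using 1
    ring
  · simp only [← sum_two_mul_H_div]
    refine hasSum_partialSums hx ?_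
    have h := (hasSum_H hx).mul_left 2
    rw [mul_div_cancel₀ _ two_ne_zero] at h
    refine (congrArg (fun g => HasSum g _) (funext fun n => ?_)).mpr h
    ring
  · refine (((hasDerivAt_neg_log_one_sub hx).pow 3).div_const 3).congr_deriv ?_
    push_cast
    ring
end
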